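/- arXiv:1601.03179 — 2 statements merged into one kernel-verified Lean document; each statement's English description precedes it below -/
import Mathlib

section
/- Fix μ ∈ (0,1/2], ε > 0, ℓ ∈ ℝ, a vertex v ∈ ℤ, and a profile η : ℤ → ℝ such that v is two-sidedly ε-flat: for all j ≥ 0 and n ≥ 0, (1/(j+n+1))·∑_{u=v−j}^{v+n} η(u) ∈ [ℓ−ε, ℓ+ε]. Apply any finite sequence of elementary updates on arbitrary edges of ℤ, where an update on ⟨u,u+1⟩ replaces (η(u), η(u+1)) by ((1−μ)η(u)+μη(u+1), μη(u)+(1−μ)η(u+1)). Then after the update sequence, the value at vertex v lies in [ℓ−6ε, ℓ+6ε]. -/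
/-- The elementary Deffuant-type `μ`-averaging update on the edge `⟨u, u+1⟩` of `ℤ`
for a real-valued opinion profile. -/
noncomputable def deffUpdate (μ : ℝ) (u : ℤ) (η : ℤ → ℝ) : ℤ → ℝ := fun v =>
  if v = u then (1 - μ) * η u + μ * η (u + 1)
  else if v = u + 1 then μ * η u + (1 - μ) * η (u + 1)
  else η v

def QC (f : ℤ → ℝ) : Prop := ∀ a b c : ℤ, a ≤ b → b ≤ c → f a ≤ f b ∨ f c ≤ f b

theorem upd_at (μ : ℝ) (u : ℤ) (g : ℤ → ℝ) :
    deffUpdate μ u g u = (1 - μ) * g u + μ * g (u + 1) := by simp [deffUpdate]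

theorem upd_at1 (μ : ℝ) (u : ℤ) (g : ℤ → ℝ) :
    deffUpdate μ u g (u + 1) = μ * g u + (1 - μ) * g (u + 1) := by simp [deffUpdate]

theorem upd_ne (μ : ℝ) (u : ℤ) (g : ℤ → ℝ) (x : ℤ) (h : x ≠ u) (h1 : x ≠ u + 1) :
    deffUpdate μ u g x = g x := by simp [deffUpdate, h, h1]

theorem upd_le {μ : ℝ} (h0 : 0 < μ) (h1 : μ ≤ 1 / 2) (u : ℤ) (g : ℤ → ℝ)
    (h : g u ≤ g (u + 1)) :
    g u ≤ deffUpdate μ u g u ∧ deffUpdate μ u g u ≤ deffUpdate μ u g (u + 1) ∧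
    deffUpdate μ u g (u + 1) ≤ g (u + 1) := by
  rw [upd_at, upd_at1]
  refine ⟨by nlinarith, by nlinarith, by nlinarith⟩

theorem upd_ge {μ : ℝ} (h0 : 0 < μ) (h1 : μ ≤ 1 / 2) (u : ℤ) (g : ℤ → ℝ)
    (h : g (u + 1) ≤ g u) :
    g (u + 1) ≤ deffUpdate μ u g (u + 1) ∧ deffUpdate μ u g (u + 1) ≤ deffUpdate μ u g u ∧
    deffUpdate μ u g u ≤ g u := by
  rw [upd_at, upd_at1]
  refine ⟨by nlinarith, by nlinarith, by nlinarith⟩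

theorem upd_bdd {μ : ℝ} (h0 : 0 < μ) (h1 : μ ≤ 1 / 2) (u : ℤ) (g : ℤ → ℝ) (c : ℝ)
    (x : ℤ) (hx : g x ≤ c) (hu : x = u → g (u + 1) ≤ c) (hu1 : x = u + 1 → g u ≤ c) :
    deffUpdate μ u g x ≤ c := by
  by_cases e : x = u
  · subst e; rw [upd_at]; have := hu rfl; nlinarith
  by_cases e1 : x = u + 1
  · subst e1; rw [upd_at1]; have := hu1 rfl; nlinarith
  rwa [upd_ne _ _ _ _ e e1]

theorem QC_upd {μ : ℝ} (h0 : 0 < μ) (h1 : μ ≤ 1 / 2) (u : ℤ) (g : ℤ → ℝ) (hg : QC g) :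
    QC (deffUpdate μ u g) := by
  intro a b c hab hbc
  by_contra! hcon
  obtain ⟨ha, hc⟩ := hcon
  have hb1 : a ≠ b := by rintro rfl; exact lt_irrefl _ ha
  have hb2 : b ≠ c := by rintro rfl; exact lt_irrefl _ hc
  have key1 := hg a b c hab hbc
  have hne := upd_ne μ u g
  have k2 : a ≤ u → u + 1 ≤ c → _ := fun h h' => hg a u c h (by omega)
  have k3 : a ≤ u → u + 1 ≤ c → _ := fun h h' => hg a (u+1) c (by omega) (by omega)
  have k4 : b ≤ u → _ := fun h => hg a b u hab h
  have k5 : b ≤ u → _ := fun h => hg a b (u+1) hab (by omega)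
  have k6 : u + 1 ≤ b → _ := fun h => hg (u+1) b c h hbc
  have k7 : u + 1 ≤ b → _ := fun h => hg u b c (by omega) hbc
  rcases le_total (g u) (g (u+1)) with h | h
  · obtain ⟨p, q, r⟩ := upd_le h0 h1 u g h
    generalize deffUpdate μ u g = G at *
    grind
  · obtain ⟨p, q, r⟩ := upd_ge h0 h1 u g h
    generalize deffUpdate μ u g = G at *
    grind

theorem QC_single (w : ℤ) : QC (Pi.single w (1 : ℝ)) := by
  intro a b c hab hbc
  simp only [Pi.single_apply]
  split_ifs <;> first | omega | norm_num

theorem sums_upd {μ : ℝ} (h0 : 0 < μ) (h1 : μ ≤ 1 / 2) (u : ℤ) (g : ℤ → ℝ) (v : ℤ) (k : ℕ) :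
    ∑ i ∈ Finset.range k, deffUpdate μ u g (v + i) = ∑ i ∈ Finset.range k, g (v + i)
      + (if 0 < k ∧ u = v + k - 1 then μ * (g (u + 1) - g u) else 0)
      + (if 0 < k ∧ u + 1 = v then μ * (g u - g (u + 1)) else 0) := by
  induction k with
  | zero => simp
  | succ k ih =>
    rw [Finset.sum_range_succ, Finset.sum_range_succ, ih]
    by_cases e : v + k = u
    · rw [e, upd_at]; 
      have : ¬ (u = v + k - 1) := by omega
      have h2 : ¬ (u + 1 = v) := by omega
      have h3 : u = v + ((k+1 : ℕ) : ℤ) - 1 := by push_cast; omega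
      rw [if_neg (by omega), if_neg (by omega), if_pos ⟨by omega, h3⟩, if_neg (by omega)]
      ring
    by_cases e1 : v + k = u + 1
    · rw [e1, upd_at1]
      have h3 : ¬ (u = v + ((k+1 : ℕ) : ℤ) - 1) := by push_cast; omega
      rw [if_neg (c := 0 < k + 1 ∧ u = v + ((k+1 : ℕ) : ℤ) - 1) (by tauto)]
      rcases Nat.eq_zero_or_pos k with hk | hk
      · subst hk
        rw [if_neg (by simp), if_neg (by simp), if_pos (by constructor <;> simp_all)]
        simp; ring
      · rw [if_pos ⟨hk, by omega⟩, if_neg (by omega), if_neg (by omega)]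
        ring
    rw [upd_ne _ _ _ _ e e1, if_neg (by omega), if_neg (c := 0 < k + 1 ∧ u = v + ((k+1 : ℕ) : ℤ) - 1) (by omega)]
    have : (0 < k ∧ u + 1 = v) ↔ (0 < k + 1 ∧ u + 1 = v) := by omega
    simp only [this]; ring

def FlatInv (c : ℝ) (v : ℤ) (g : ℤ → ℝ) : Prop :=
  (∀ x, g x ≤ c) ∨ (QC g ∧ (∀ k : ℕ, ∑ i ∈ Finset.range k, g (v + i) ≤ k * c) ∧
    ∃ p, v < p ∧ g v < g p)

theorem Inv_upd {μ : ℝ} (h0 : 0 < μ) (h1 : μ ≤ 1 / 2) (u : ℤ) (c : ℝ) (v : ℤ) (g : ℤ → ℝ)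
    (hg : FlatInv c v g) : FlatInv c v (deffUpdate μ u g) := by
  rcases hg with hg | ⟨hq, hs, p, hp, hgp⟩
  · left; intro x
    exact upd_bdd h0 h1 u g c x (hg _) (fun _ => hg _) (fun _ => hg _)
  have hv : g v ≤ c := by simpa using hs 1
  have hmon : ∀ x ≤ v, g x ≤ g v := by
    intro x hx
    rcases hq x v p hx hp.le with h | h
    · exact h
    · linarith
  have hs' : ∀ k : ℕ, ∑ i ∈ Finset.range k, deffUpdate μ u g (v + i) ≤ k * c := by
    intro k
    rw [sums_upd h0 h1]
    have hk := hs k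
    split_ifs with ha hb hb
    · omega
    · obtain ⟨hk0, hu⟩ := ha
      obtain ⟨k, rfl⟩ : ∃ j, k = j + 1 := ⟨k - 1, by omega⟩
      have hk1 := hs k
      have hk2 := hs (k + 2)
      rw [Finset.sum_range_succ] at hk2
      rw [Finset.sum_range_succ] at hk hk2 ⊢
      have e1 : u = v + k := by push_cast at hu; omega
      have e2 : u + 1 = v + (k + 1 : ℕ) := by push_cast; omega
      rw [e2, e1]
      push_cast at *
      nlinarith
    · have := hmon u (by omega)
      rw [hb.2]
      nlinarith
    · linarith
  by_cases hex : ∃ p, v < p ∧ deffUpdate μ u g v < deffUpdate μ u g p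
  · exact Or.inr ⟨QC_upd h0 h1 u g hq, hs', hex⟩
  · push Not at hex
    have hv' : deffUpdate μ u g v ≤ c := by simpa using hs' 1
    left; intro x
    rcases lt_trichotomy x v with h | h | h
    · apply upd_bdd h0 h1
      · linarith [hmon x h.le]
      · intro e; linarith [hmon (u+1) (by omega)]
      · intro e; linarith [hmon u (by omega)]
    · rw [h]; exact hv'
    · exact (hex x h).trans hv'

theorem Inv_single (v w : ℤ) (h : v ≤ w) :
    FlatInv (1 / ((w - v : ℤ) + 1 : ℝ)) v (Pi.single w (1 : ℝ)) := by
  rcases h.eq_or_lt with e | e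
  · left; subst e; intro x; simp only [Pi.single_apply]; split_ifs <;> simp
  · right
    refine ⟨QC_single w, ?_, w, e, by simp [e.ne]⟩
    intro k
    have hpos : (0 : ℝ) < (w - v : ℤ) + 1 := by
      have : (0 : ℝ) < (w - v : ℤ) := by exact_mod_cast (by omega : 0 < w - v)
      linarith
    rw [mul_one_div, le_div_iff₀ hpos]
    by_cases hk : w - v < k
    · have : ∑ i ∈ Finset.range k, (Pi.single w (1 : ℝ) : ℤ → ℝ) (v + i) = 1 := by
        rw [Finset.sum_eq_single (w - v).toNat]
        · have : v + ((w - v).toNat : ℤ) = w := by omega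
          rw [this, Pi.single_eq_same]
        · intro b _ hb
          have : v + (b : ℤ) ≠ w := by omega
          simp [Pi.single_apply, this]
        · intro hh; simp at hh; omega
      rw [this, one_mul]
      exact_mod_cast (by omega : (w - v) + 1 ≤ (k : ℤ))
    · have : ∑ i ∈ Finset.range k, (Pi.single w (1 : ℝ) : ℤ → ℝ) (v + i) = 0 := by
        apply Finset.sum_eq_zero
        intro i hi
        have := Finset.mem_range.1 hi
        have : v + (i : ℤ) ≠ w := by omega
        simp [Pi.single_apply, this]
      rw [this, zero_mul]; positivity

theorem Inv_fold {μ : ℝ} (h0 : 0 < μ) (h1 : μ ≤ 1 / 2) (c : ℝ) (v : ℤ) (l : List ℤ) :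
    ∀ g, FlatInv c v g → FlatInv c v (l.foldl (fun ξ u => deffUpdate μ u ξ) g) := by
  induction l with
  | nil => intro g h; exact h
  | cons u l ih => intro g h; exact ih _ (Inv_upd h0 h1 u c v g h)

theorem bound_right {μ : ℝ} (h0 : 0 < μ) (h1 : μ ≤ 1 / 2) (v w : ℤ) (h : v ≤ w) (l : List ℤ) :
    (l.foldl (fun ξ u => deffUpdate μ u ξ) (Pi.single w (1 : ℝ))) v
      ≤ 1 / ((w - v : ℤ) + 1 : ℝ) := by
  rcases Inv_fold h0 h1 _ v l _ (Inv_single v w h) with hh | ⟨_, hh, _⟩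
  · exact hh v
  · simpa using hh 1

theorem upd_refl (μ : ℝ) (u : ℤ) (g : ℤ → ℝ) :
    (fun x => deffUpdate μ u g (-x)) = deffUpdate μ (-u - 1) (fun x => g (-x)) := by
  funext x
  have e1 : -(-u - 1) = u + 1 := by ring
  have e2 : -(-u - 1 + 1) = u := by ring
  simp only [deffUpdate, e1, e2]
  split_ifs <;> first | omega | ring

theorem fold_refl (μ : ℝ) (l : List ℤ) : ∀ g : ℤ → ℝ, ∀ x,
    (l.foldl (fun ξ u => deffUpdate μ u ξ) g) (-x) =
    ((l.map (fun u => -u - 1)).foldl (fun ξ u => deffUpdate μ u ξ) (fun x => g (-x))) x := by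
  induction l with
  | nil => intro g x; rfl
  | cons u l ih =>
    intro g x
    simp only [List.foldl_cons, List.map_cons]
    rw [ih, upd_refl]

theorem bound_left {μ : ℝ} (h0 : 0 < μ) (h1 : μ ≤ 1 / 2) (v w : ℤ) (h : w ≤ v) (l : List ℤ) :
    (l.foldl (fun ξ u => deffUpdate μ u ξ) (Pi.single w (1 : ℝ))) v
      ≤ 1 / ((v - w : ℤ) + 1 : ℝ) := by
  have := fold_refl μ l (Pi.single w (1 : ℝ)) (-v)
  rw [neg_neg] at this
  rw [this]
  have e : (fun x : ℤ => (Pi.single w (1 : ℝ) : ℤ → ℝ) (-x)) = Pi.single (-w) (1 : ℝ) := by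
    funext x; simp only [Pi.single_apply, neg_eq_iff_eq_neg]
  rw [e]
  have := bound_right h0 h1 (-v) (-w) (by omega) (l.map (fun u => -u - 1))
  have e2 : -w - -v = v - w := by ring
  rwa [e2] at this

noncomputable def X (μ : ℝ) (v : ℤ) (l : List ℤ) : ℤ → ℝ :=
  l.foldr (fun u ξ => deffUpdate μ u ξ) (Pi.single v (1 : ℝ))

theorem X_QC {μ : ℝ} (h0 : 0 < μ) (h1 : μ ≤ 1 / 2) (v : ℤ) (l : List ℤ) : QC (X μ v l) := by
  induction l with
  | nil => exact QC_single v
  | cons u l ih => exact QC_upd h0 h1 u _ ih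

theorem X_nonneg {μ : ℝ} (h0 : 0 < μ) (h1 : μ ≤ 1 / 2) (v : ℤ) (l : List ℤ) :
    ∀ x, 0 ≤ X μ v l x := by
  induction l with
  | nil => intro x; simp only [X, List.foldr_nil, Pi.single_apply]; split_ifs <;> simp
  | cons u l ih =>
    intro x
    have hu := ih u
    have hu1 := ih (u + 1)
    have hx := ih x
    change 0 ≤ deffUpdate μ u (X μ v l) x
    unfold deffUpdate
    split_ifs
    · nlinarith
    · nlinarith
    · exact hx

theorem self_adj (μ : ℝ) (u : ℤ) (f g : ℤ → ℝ) (s : Finset ℤ) (hu : u ∈ s) (hu1 : u + 1 ∈ s) :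
    ∑ x ∈ s, f x * deffUpdate μ u g x = ∑ x ∈ s, deffUpdate μ u f x * g x := by
  have hu1' : u + 1 ∈ s.erase u := by simp [hu1]
  rw [← Finset.add_sum_erase s _ hu, ← Finset.add_sum_erase s _ hu,
    ← Finset.add_sum_erase _ _ hu1', ← Finset.add_sum_erase _ _ hu1']
  have : ∑ x ∈ (s.erase u).erase (u + 1), f x * deffUpdate μ u g x
      = ∑ x ∈ (s.erase u).erase (u + 1), deffUpdate μ u f x * g x := by
    apply Finset.sum_congr rfl
    intro x hx
    simp only [Finset.mem_erase] at hx
    rw [upd_ne _ _ _ _ hx.2.1 hx.1, upd_ne _ _ _ _ hx.2.1 hx.1]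
  rw [this, upd_at, upd_at, upd_at1, upd_at1]; ring

theorem dual (μ : ℝ) (v : ℤ) (l : List ℤ) : ∃ N : ℕ, ∀ s : Finset ℤ,
    Finset.Icc (v - N) (v + N) ⊆ s → ∀ η : ℤ → ℝ,
    (l.foldl (fun ξ u => deffUpdate μ u ξ) η) v = ∑ x ∈ s, X μ v l x * η x := by
  induction l with
  | nil =>
    refine ⟨0, fun s hs η => ?_⟩
    have hv : v ∈ s := hs (by simp)
    simp [X, Pi.single_apply, hv]
  | cons u l ih =>
    obtain ⟨N, hN⟩ := ih
    refine ⟨N + (u - v).natAbs + 1, fun s hs η => ?_⟩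
    have hu : u ∈ s := hs (by simp only [Finset.mem_Icc]; omega)
    have hu1 : u + 1 ∈ s := hs (by simp only [Finset.mem_Icc]; omega)
    have hs' : Finset.Icc (v - N) (v + N) ⊆ s := by
      refine Finset.Subset.trans ?_ hs
      apply Finset.Icc_subset_Icc <;> omega
    rw [List.foldl_cons, hN s hs', self_adj μ u _ _ s hu hu1]
    rfl

theorem fold_one (μ : ℝ) (l : List ℤ) :
    l.foldl (fun ξ u => deffUpdate μ u ξ) (fun _ => (1 : ℝ)) = fun _ => 1 := by
  induction l with
  | nil => rfl
  | cons u l ih =>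
    rw [List.foldl_cons]
    have : deffUpdate μ u (fun _ => (1 : ℝ)) = fun _ => 1 := by
      funext x; simp [deffUpdate]
    rw [this, ih]

theorem sum_split (F : ℤ → ℝ) (v : ℤ) (j n : ℕ) :
    ∑ x ∈ Finset.Icc (v - (j : ℤ)) (v + (n : ℤ)), F x =
    ∑ i ∈ Finset.range (n + 1), F (v + i) + ∑ i ∈ Finset.range (j + 1), F (v - i) - F v := by
  induction n with
  | zero =>
    induction j with
    | zero => simp
    | succ j ih =>
      rw [Finset.sum_range_succ _ (j + 1)]
      have : Finset.Icc (v - ((j + 1 : ℕ) : ℤ)) (v + ((0 : ℕ) : ℤ))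
          = insert (v - ((j + 1 : ℕ) : ℤ)) (Finset.Icc (v - (j : ℤ)) (v + ((0 : ℕ) : ℤ))) := by
        ext x; simp only [Finset.mem_Icc, Finset.mem_insert]; push_cast; omega
      rw [this, Finset.sum_insert (by rw [Finset.mem_Icc]; omega), ih]; ring
  | succ n ih =>
    rw [Finset.sum_range_succ _ (n + 1)]
    have : Finset.Icc (v - (j : ℤ)) (v + ((n + 1 : ℕ) : ℤ))
        = insert (v + ((n + 1 : ℕ) : ℤ)) (Finset.Icc (v - (j : ℤ)) (v + (n : ℤ))) := by
      ext x; simp only [Finset.mem_Icc, Finset.mem_insert]; push_cast; omega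
    rw [this, Finset.sum_insert (by rw [Finset.mem_Icc]; omega), ih]; ring

theorem abel1 (f h : ℕ → ℝ) (ε : ℝ) (H : ∀ n : ℕ, |∑ i ∈ Finset.range n, h i| ≤ ε * n)
    (N : ℕ) : |∑ i ∈ Finset.range N, f i * h i - f N * ∑ i ∈ Finset.range N, h i| ≤
      ε * ∑ i ∈ Finset.range N, |f i - f (i + 1)| * (i + 1) := by
  induction N with
  | zero => simp
  | succ N ih =>
    have e : ∑ i ∈ Finset.range (N + 1), f i * h i - f (N + 1) * ∑ i ∈ Finset.range (N + 1), h i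
      = (∑ i ∈ Finset.range N, f i * h i - f N * ∑ i ∈ Finset.range N, h i)
        + (f N - f (N + 1)) * ∑ i ∈ Finset.range (N + 1), h i := by
      simp only [Finset.sum_range_succ]; ring
    rw [e, Finset.sum_range_succ (fun i : ℕ => |f i - f (i + 1)| * ((i : ℝ) + 1))]
    refine (abs_add_le _ _).trans ?_
    rw [abs_mul, mul_add]
    have := H (N + 1)
    push_cast at this
    have := mul_le_mul_of_nonneg_left this (abs_nonneg (f N - f (N + 1)))
    linarith

theorem abel2 (f : ℕ → ℝ) (hf : ∀ i, 0 ≤ f i) (m : ℕ)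
    (hm1 : ∀ a, a + 1 ≤ m → f a ≤ f (a + 1)) (hm2 : ∀ a, m ≤ a → f (a + 1) ≤ f a) (k : ℕ) :
    (m + k : ℕ) * f (m + k) + ∑ i ∈ Finset.range (m + k), |f i - f (i + 1)| * ((i : ℝ) + 1) ≤
     2 * m * f m + ∑ i ∈ Finset.range k, f (m + i) := by
  induction k with
  | zero =>
    have : ∀ N : ℕ, N ≤ m → N * f N + ∑ i ∈ Finset.range N, |f i - f (i + 1)| * ((i : ℝ) + 1)
        ≤ 2 * N * f N := by
      intro N
      induction N with
      | zero => simp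
      | succ N ih =>
        intro hN
        have h1 := hm1 N hN
        have h2 := ih (by omega)
        rw [Finset.sum_range_succ, abs_of_nonpos (by linarith)]
        push_cast
        nlinarith [hf N]
    simpa using this m le_rfl
  | succ k ih =>
    have h1 := hm2 (m + k) (by omega)
    rw [← add_assoc m k 1, Finset.sum_range_succ, Finset.sum_range_succ,
      abs_of_nonneg (by linarith)]
    push_cast at *
    nlinarith

theorem abel3 (f h : ℕ → ℝ) (ε : ℝ) (hε : 0 < ε)
    (H : ∀ n : ℕ, |∑ i ∈ Finset.range n, h i| ≤ ε * n) (hf : ∀ i, 0 ≤ f i) (m : ℕ)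
    (hm1 : ∀ a, a + 1 ≤ m → f a ≤ f (a + 1)) (hm2 : ∀ a, m ≤ a → f (a + 1) ≤ f a)
    (N : ℕ) (hN : m ≤ N) :
    |∑ i ∈ Finset.range N, f i * h i| ≤ ε * (2 * m * f m + ∑ i ∈ Finset.range N, f i) := by
  obtain ⟨k, rfl⟩ := Nat.exists_eq_add_of_le hN
  have a1 := abel1 f h ε H (m + k)
  have a2 := abel2 f hf m hm1 hm2 k
  have a3 : ∑ i ∈ Finset.range k, f (m + i) ≤ ∑ i ∈ Finset.range (m + k), f i := by
    rw [Finset.sum_range_add]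
    have := Finset.sum_nonneg (s := Finset.range m) (f := f) (fun i _ => hf i)
    linarith
  have a4 : |f (m + k) * ∑ i ∈ Finset.range (m + k), h i| ≤ f (m + k) * (ε * (m + k : ℕ)) := by
    rw [abs_mul, abs_of_nonneg (hf _)]
    exact mul_le_mul_of_nonneg_left (H _) (hf _)
  have a5 := mul_le_mul_of_nonneg_left (a2.trans (add_le_add le_rfl a3)) hε.le
  have a6 := abs_sub_abs_le_abs_sub (∑ i ∈ Finset.range (m + k), f i * h i)
    (f (m + k) * ∑ i ∈ Finset.range (m + k), h i)
  rw [mul_add] at a5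
  linarith

theorem final (f g h h' : ℕ → ℝ) (ε : ℝ) (hε : 0 < ε)
    (H : ∀ n : ℕ, |∑ i ∈ Finset.range n, h i| ≤ ε * n)
    (H' : ∀ n : ℕ, |∑ i ∈ Finset.range n, h' i| ≤ ε * n)
    (hf : ∀ i, 0 ≤ f i) (hg : ∀ i, 0 ≤ g i) (m : ℕ)
    (hm1 : ∀ a, a + 1 ≤ m → f a ≤ f (a + 1)) (hm2 : ∀ a, m ≤ a → f (a + 1) ≤ f a)
    (hm3 : ∀ a, g (a + 1) ≤ g a) (hm : f m ≤ 1 / ((m : ℝ) + 1)) (hf0 : f 0 ≤ 1)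
    (N : ℕ) (hN : m ≤ N)
    (hsum : ∑ i ∈ Finset.range N, f i + ∑ i ∈ Finset.range N, g i - f 0 = 1) :
    |∑ i ∈ Finset.range N, f i * h i + ∑ i ∈ Finset.range N, g i * h' i - f 0 * h 0| ≤ 6 * ε := by
  have b1 := abel3 f h ε hε H hf m hm1 hm2 N hN
  have b2 := abel3 g h' ε hε H' hg 0 (fun a ha => by omega) (fun a _ => hm3 a) N (by omega)
  have b3 : |f 0 * h 0| ≤ ε := by
    have := H 1
    simp only [Finset.sum_range_one, Nat.cast_one, mul_one] at this
    rw [abs_mul, abs_of_nonneg (hf 0)]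
    nlinarith [abs_nonneg (h 0)]
  have b4 : m * f m ≤ 1 := by
    rw [le_div_iff₀ (by positivity)] at hm
    nlinarith [hf m]
  have b5 : ε * (2 * m * f m + ∑ i ∈ Finset.range N, f i) +
     ε * (2 * (0:ℕ) * g 0 + ∑ i ∈ Finset.range N, g i) ≤ 4 * ε + ε := by
    have : (2 * m * f m + ∑ i ∈ Finset.range N, f i) +
     (2 * (0:ℕ) * g 0 + ∑ i ∈ Finset.range N, g i) ≤ 4 := by push_cast; linarith
    nlinarith
  have c1 := abs_le.1 b1
  have c2 := abs_le.1 b2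
  have c3 := abs_le.1 b3
  rw [abs_le]
  constructor <;> linarith

/-- If vertex `v` is two-sidedly `ε`-flat with respect to the profile `η`, then after
any finite sequence of elementary updates on arbitrary edges of `ℤ`, the value at
vertex `v` lies within `6ε` of `ℓ`. -/
theorem two_sided_eps_flat_stays_within (μ : ℝ) (hμ : μ ∈ Set.Ioc (0 : ℝ) (1 / 2))
    (ε : ℝ) (hε : 0 < ε) (ℓ : ℝ) (v : ℤ) (η : ℤ → ℝ)
    (hflat : ∀ j n : ℕ,
      ((j : ℝ) + (n : ℝ) + 1)⁻¹ * ∑ u ∈ Finset.Icc (v - (j : ℤ)) (v + (n : ℤ)), η u ∈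
        Set.Icc (ℓ - ε) (ℓ + ε))
    (l : List ℤ) :
    (l.foldl (fun ξ u => deffUpdate μ u ξ) η) v ∈ Set.Icc (ℓ - 6 * ε) (ℓ + 6 * ε) := by
  obtain ⟨h0, h1⟩ := hμ
  obtain ⟨N, hN⟩ := dual μ v l
  have hq := X_QC h0 h1 v l
  have hnn := X_nonneg h0 h1 v l
  have hXv : ∀ w, X μ v l w = (l.foldl (fun ξ u => deffUpdate μ u ξ) (Pi.single w (1 : ℝ))) v := by
    intro w
    rw [hN (insert w (Finset.Icc (v - N) (v + N))) (Finset.subset_insert _ _)]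
    simp [Pi.single_apply]
  have hX0 : ∀ w, w ∉ Finset.Icc (v - (N : ℤ)) (v + N) → X μ v l w = 0 := by
    intro w hw
    rw [hXv, hN _ (Finset.Subset.refl _)]
    apply Finset.sum_eq_zero
    intro x hx
    have : x ≠ w := by rintro rfl; exact hw hx
    simp [Pi.single_apply, this]
  have hval := hN _ (Finset.Subset.refl _) η
  have hone := hN _ (Finset.Subset.refl _) (fun _ => 1)
  rw [fold_one] at hone
  simp only [mul_one] at hone
  have hR : ∀ w, v ≤ w → X μ v l w ≤ _ := fun w h => (hXv w).le.trans (bound_right h0 h1 v w h l)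
  have hL : ∀ w, w ≤ v → X μ v l w ≤ _ := fun w h => (hXv w).le.trans (bound_left h0 h1 v w h l)
  generalize X μ v l = ξ at *
  obtain ⟨w, hw, hmax'⟩ := Finset.exists_max_image (Finset.Icc (v - (N : ℤ)) (v + N)) ξ
    ⟨v, by simp⟩
  have hmax : ∀ x, ξ x ≤ ξ w := by
    intro x
    by_cases hx : x ∈ Finset.Icc (v - (N : ℤ)) (v + N)
    · exact hmax' x hx
    · rw [hX0 x hx]; exact hnn w
  have hup : ∀ a b, a ≤ b → b ≤ w → ξ a ≤ ξ b := by
    intro a b hab hb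
    rcases hq a b w hab hb with h | h
    · exact h
    · exact (hmax a).trans h
  have hdown : ∀ a b, a ≤ b → w ≤ a → ξ b ≤ ξ a := by
    intro a b hab hb
    rcases hq w a b hb hab with h | h
    · exact (hmax b).trans h
    · exact h
  have hHR : ∀ n : ℕ, |∑ i ∈ Finset.range n, (η (v + i) - ℓ)| ≤ ε * n := by
    intro n
    rcases n with _ | n
    · simp
    have := hflat 0 n
    rw [sum_split] at this
    simp only [zero_add, Finset.sum_range_one, Nat.cast_zero, sub_zero, add_sub_cancel_right,
      Set.mem_Icc, inv_mul_eq_div] at this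
    rw [le_div_iff₀ (by positivity), div_le_iff₀ (by positivity)] at this
    rw [Finset.sum_sub_distrib, abs_le]
    simp only [Finset.sum_const, Finset.card_range, nsmul_eq_mul]
    push_cast
    constructor <;> linarith
  have hHL : ∀ n : ℕ, |∑ i ∈ Finset.range n, (η (v - i) - ℓ)| ≤ ε * n := by
    intro n
    rcases n with _ | n
    · simp
    have := hflat n 0
    rw [sum_split] at this
    simp only [zero_add, Finset.sum_range_one, Nat.cast_zero, add_zero, add_sub_cancel_left,
      Set.mem_Icc, inv_mul_eq_div] at this
    rw [le_div_iff₀ (by positivity), div_le_iff₀ (by positivity)] at this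
    rw [Finset.sum_sub_distrib, abs_le]
    simp only [Finset.sum_const, Finset.card_range, nsmul_eq_mul]
    push_cast
    constructor <;> linarith
  have hdiff : (l.foldl (fun ξ u => deffUpdate μ u ξ) η) v - ℓ =
      ∑ x ∈ Finset.Icc (v - (N : ℤ)) (v + N), ξ x * (η x - ℓ) := by
    simp only [mul_sub, Finset.sum_sub_distrib, ← Finset.sum_mul]
    rw [← hone, hval, one_mul]
  rw [sum_split] at hone
  rw [sum_split] at hdiff
  have hv1 : ξ v ≤ 1 := by simpa using hR v le_rfl
  simp only [Finset.mem_Icc] at hw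
  suffices hs : |(l.foldl (fun ξ u => deffUpdate μ u ξ) η) v - ℓ| ≤ 6 * ε by
    have := abs_le.1 hs
    exact ⟨by linarith, by linarith⟩
  rw [hdiff]
  rcases le_total v w with hvw | hvw
  · obtain ⟨m, hm⟩ := Int.eq_ofNat_of_zero_le (sub_nonneg.2 hvw)
    have ew : w = v + m := by omega
    have := final (fun i => ξ (v + i)) (fun i => ξ (v - i)) (fun i => η (v + i) - ℓ)
      (fun i => η (v - i) - ℓ) ε hε hHR hHL (fun i => hnn _) (fun i => hnn _) m
      (fun a ha => hup _ _ (by push_cast; omega) (by push_cast; omega))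
      (fun a ha => hdown _ _ (by push_cast; omega) (by omega))
      (fun a => hup _ _ (by push_cast; omega) (by omega))
      (by have := hR w hvw; rw [hm, ew] at this; simpa using this)
      (by simpa using hv1) (N + 1) (by omega) (by simpa using hone.symm)
    simpa using this
  · obtain ⟨m, hm⟩ := Int.eq_ofNat_of_zero_le (sub_nonneg.2 hvw)
    have ew : w = v - m := by omega
    have := final (fun i => ξ (v - i)) (fun i => ξ (v + i)) (fun i => η (v - i) - ℓ)
      (fun i => η (v + i) - ℓ) ε hε hHL hHR (fun i => hnn _) (fun i => hnn _) m
      (fun a ha => hdown _ _ (by push_cast; omega) (by push_cast; omega))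
      (fun a ha => hup _ _ (by push_cast; omega) (by omega))
      (fun a => hdown _ _ (by push_cast; omega) (by omega))
      (by have := hL w hvw; rw [hm, ew] at this; simpa using this)
      (by simpa using hv1) (N + 1) (by omega) (by rw [add_comm]; simpa using hone.symm)
    rw [add_comm (∑ i ∈ Finset.range (N + 1), _) (∑ i ∈ Finset.range (N + 1), _)]
    simpa using this
end

section
/- Let η : ℕ → ℝ, m ∈ ℝ and ε ≥ 0 satisfy (1/(n+1))·∑_{k=0}^{n} η(k) ∈ [m−ε, m+ε] for every n ≥ 0. Let ξ : ℕ → ℝ be nonnegative, nonincreasing, with finite support and ∑_{k} ξ(k) = 1. Then the weighted average satisfies ∑_{k} ξ(k)·η(k) ∈ [m−ε, m+ε]. -/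
theorem abel_aux (ξ a : ℕ → ℝ) (h0 : ∀ k, 0 ≤ ξ k) (hanti : Antitone ξ)
    (ha : ∀ n, 0 ≤ ∑ k ∈ Finset.range n, a k) (N : ℕ) :
    0 ≤ ∑ k ∈ Finset.range N, ξ k * a k := by
  have key : ∀ n, ξ n * ∑ k ∈ Finset.range n, a k ≤ ∑ k ∈ Finset.range n, ξ k * a k := by
    intro n
    induction n with
    | zero => simp
    | succ n ih =>
      have h1 := mul_le_mul_of_nonneg_right (hanti (Nat.le_succ n)) (ha (n + 1))
      rw [Finset.sum_range_succ (fun k => ξ k * a k)]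
      rw [Finset.sum_range_succ] at h1 ⊢
      simp only [Nat.succ_eq_add_one] at h1
      linarith [mul_add (ξ n) (∑ k ∈ Finset.range n, a k) (a n)]
  exact (mul_nonneg (h0 N) (ha N)).trans (key N)


/-- If all initial-segment averages of a sequence `η` lie within `ε` of `m`, and `ξ`
is a nonnegative, nonincreasing weight sequence with finite support summing to `1`,
then the weighted average `∑ ξ(k)·η(k)` also lies within `ε` of `m`. -/
theorem weighted_avg_of_flat (η : ℕ → ℝ) (m ε : ℝ) (hε : 0 ≤ ε)
    (hflat : ∀ n : ℕ, ((n : ℝ) + 1)⁻¹ * ∑ k ∈ Finset.range (n + 1), η k ∈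
      Set.Icc (m - ε) (m + ε))
    (ξ : ℕ → ℝ) (hξnonneg : ∀ k, 0 ≤ ξ k) (hξanti : Antitone ξ)
    (hξfin : (Function.support ξ).Finite) (hξsum : ∑' k, ξ k = 1) :
    ∑' k, ξ k * η k ∈ Set.Icc (m - ε) (m + ε) := by
  obtain ⟨N, hN⟩ : ∃ N, ∀ k, N ≤ k → ξ k = 0 := by
    obtain ⟨B, hB⟩ := hξfin.bddAbove
    refine ⟨B + 1, fun k hk => ?_⟩
    by_contra hne
    have := hB (Function.mem_support.mpr hne)
    omega
  have e1 : ∑' k, ξ k = ∑ k ∈ Finset.range N, ξ k :=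
    tsum_eq_sum (fun k hk => hN k (by simpa using hk))
  have e2 : ∑' k, ξ k * η k = ∑ k ∈ Finset.range N, ξ k * η k :=
    tsum_eq_sum (fun k hk => by rw [hN k (by simpa using hk), zero_mul])
  rw [e1] at hξsum
  rw [e2]
  have hl := abel_aux ξ (fun k => η k - (m - ε)) hξnonneg hξanti (by
    intro n
    cases n with
    | zero => simp
    | succ n =>
      have hp : (0 : ℝ) < (n : ℝ) + 1 := by positivity
      have h := (hflat n).1
      rw [inv_mul_eq_div, le_div_iff₀ hp] at h
      rw [Finset.sum_sub_distrib, Finset.sum_const, Finset.card_range, nsmul_eq_mul]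
      push_cast
      linarith) N
  have hu := abel_aux ξ (fun k => (m + ε) - η k) hξnonneg hξanti (by
    intro n
    cases n with
    | zero => simp
    | succ n =>
      have hp : (0 : ℝ) < (n : ℝ) + 1 := by positivity
      have h := (hflat n).2
      rw [inv_mul_eq_div, div_le_iff₀ hp] at h
      rw [Finset.sum_sub_distrib, Finset.sum_const, Finset.card_range, nsmul_eq_mul]
      push_cast
      linarith) N
  simp only [mul_sub, Finset.sum_sub_distrib] at hl hu
  simp only [← mul_sub, ← mul_add, ← Finset.sum_mul, ← Finset.sum_sub_distrib] at hl hu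
  simp only [mul_sub, Finset.sum_sub_distrib, ← Finset.sum_mul, hξsum] at hl hu
  constructor <;> linarith
end
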